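/- Let γ > 0 and F = {e^{−i n^{−γ}} : n ≥ 1} ∪ {1}. Then F is not an 𝓛₂-set: there is no constant C > 0 such that ∫_{Γ(ζ,F)} log²(dist(ζ,F)/dist(ζ',F)) |dζ'|/|ζ−ζ'|² ≤ C/dist(ζ,F) for all ζ ∈ 𝕋∖F. -/

import Mathlib

open MeasureTheory Real Set

noncomputable section

/-- The unit circle in `ℂ`. -/
def circleT : Set ℂ := Metric.sphere (0 : ℂ) 1

/-- Arc-length parametrization of the unit circle. -/
def cpt (θ : ℝ) : ℂ := Complex.exp (θ * Complex.I)

/-- Distance from a point to a set. -/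
def dE (E : Set ℂ) (ζ : ℂ) : ℝ := Metric.infDist ζ E

/-- Arc-length integral over the whole circle. -/
def circInt (f : ℂ → ℝ) : ℝ := ∫ θ in Set.Ioc 0 (2 * π), f (cpt θ)

/-- Arc-length integral over a subset `Λ` of the circle. -/
def circIntOn (Λ : Set ℂ) (f : ℂ → ℝ) : ℝ :=
  ∫ θ in {θ ∈ Set.Ioc 0 (2 * π) | cpt θ ∈ Λ}, f (cpt θ)

/-- `E` has arc-length (Lebesgue) measure zero. -/
def MeasureZeroOnCircle (E : Set ℂ) : Prop :=
  volume {θ ∈ Set.Ioc 0 (2 * π) | cpt θ ∈ E} = 0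

/-- `E` is a Carleson set: `∫_𝕋 log dist(ζ,E) |dζ| > -∞`. -/
def CarlesonSet (E : Set ℂ) : Prop :=
  IntegrableOn (fun θ => Real.log (dE E (cpt θ))) (Set.Ioc 0 (2 * π)) volume

/-- `I(ζ,E)`: the connected component of `𝕋 \ E` containing `ζ`. -/
def compArc (E : Set ℂ) (ζ : ℂ) : Set ℂ := connectedComponentIn (circleT \ E) ζ

/-- `Γ(ζ,E)`. -/
def GammaSet (E : Set ℂ) (ζ : ℂ) : Set ℂ :=
  {ζ' ∈ circleT \ compArc E ζ | dE E ζ' ≤ dE E ζ}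

/-- `Σ(ζ,E)`. -/
def SigmaSet (E : Set ℂ) (ζ : ℂ) : Set ℂ :=
  {ζ' ∈ circleT \ compArc E ζ | dE E ζ ≤ dE E ζ'}

/-- The Richter–Sundberg integrand for the outer function with boundary modulus
`ω(dist(·,E))`. -/
def RSker (ω : ℝ → ℝ) (E : Set ℂ) (ζ ζ' : ℂ) : ℝ :=
  ((ω (dE E ζ')) ^ 2 - (ω (dE E ζ)) ^ 2
    - 2 * (ω (dE E ζ)) ^ 2 * Real.log (ω (dE E ζ') / ω (dE E ζ))) / ‖ζ - ζ'‖ ^ 2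

/-- Local Dirichlet integral `D_ζ(f_{ω,E})` (Richter–Sundberg formula). -/
def locDir (ω : ℝ → ℝ) (E : Set ℂ) (ζ : ℂ) : ℝ :=
  (1 / (2 * π)) * circInt (fun ζ' => RSker ω E ζ ζ')

/-- Local Dirichlet integral restricted to `Λ`. -/
def locDirOn (ω : ℝ → ℝ) (E : Set ℂ) (Λ : Set ℂ) (ζ : ℂ) : ℝ :=
  (1 / (2 * π)) * circIntOn Λ (fun ζ' => RSker ω E ζ ζ')

/-- `E` is an `𝓛₁`-set. -/
def L1Set (E : Set ℂ) : Prop :=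
  ∃ C > 0, ∀ ζ ∈ circleT \ E,
    circIntOn (GammaSet E ζ)
      (fun ζ' => Real.log (dE E ζ / dE E ζ') / ‖ζ - ζ'‖ ^ 2) ≤ C / dE E ζ

/-- The `𝓛₂` inequality with constant `C`. -/
def L2With (E : Set ℂ) (C : ℝ) : Prop :=
  ∀ ζ ∈ circleT \ E,
    circIntOn (GammaSet E ζ)
      (fun ζ' => (Real.log (dE E ζ / dE E ζ')) ^ 2 / ‖ζ - ζ'‖ ^ 2) ≤ C / dE E ζ

/-- `E` is an `𝓛₂`-set. -/
def L2Set (E : Set ℂ) : Prop := ∃ C > 0, L2With E C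

/-- Supremum of `dist(·,E)` over the arc `cpt '' (a,b]`. -/
def arcSup (E : Set ℂ) (a b : ℝ) : ℝ := sSup ((fun θ => dE E (cpt θ)) '' Set.Ioc a b)

/-- `E` is a `𝒦`-set (Kotochigov). -/
def KSet (E : Set ℂ) : Prop :=
  ∃ c > 0, ∀ a b : ℝ, a < b → b ≤ a + 2 * π → c * (b - a) ≤ arcSup E a b

/-- Integral of a weight over the arc `cpt '' (a,b]` (with respect to arc length). -/
def arcInt (w : ℂ → ℝ) (a b : ℝ) : ℝ := ∫ θ in Set.Ioc a b, w (cpt θ)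

/-- Double logarithmic integral of a weight over an arc. -/
def arcDouble (w : ℂ → ℝ) (a b : ℝ) : ℝ :=
  ∫ θ in Set.Ioc a b, (∫ θ' in Set.Ioc a b,
    Real.log (1 / ‖cpt θ - cpt θ'‖) * w (cpt θ) * w (cpt θ'))

/-- Arc-length measure of `{ζ ∈ I : dist(ζ,E) ≤ t}` for the arc `cpt '' (a,b]`. -/
def sublevelMeas (E : Set ℂ) (a b t : ℝ) : ℝ :=
  (volume {θ ∈ Set.Ioc a b | dE E (cpt θ) ≤ t}).toReal

/-- Arc-length measure of `E_t = {ζ ∈ 𝕋 : dist(ζ,E) ≤ t}`. -/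
def EtMeas (E : Set ℂ) (t : ℝ) : ℝ := sublevelMeas E 0 (2 * π) t

/-- The open unit disc. -/
def unitDisc : Set ℂ := Metric.ball (0 : ℂ) 1

/-- Membership in the (holomorphic) Dirichlet space `𝒟`. -/
def MemDirichlet (f : ℂ → ℂ) : Prop :=
  DifferentiableOn ℂ f unitDisc ∧
  (∃ M : ℝ, ∀ r ∈ Set.Ioo (0 : ℝ) 1,
    (∫ θ in Set.Ioc 0 (2 * π), ‖f ((r : ℂ) * cpt θ)‖ ^ 2) ≤ M) ∧
  IntegrableOn (fun z => ‖deriv f z‖ ^ 2) unitDisc volume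

/-- `f` is a multiplier of the Dirichlet space `𝒟`. -/
def IsMultiplierD (f : ℂ → ℂ) : Prop :=
  ∀ g : ℂ → ℂ, MemDirichlet g → MemDirichlet (fun z => f z * g z)

/-- The outer function `f_{ω,E}` with boundary modulus `ω(dist(·,E))`. -/
def outerFun (ω : ℝ → ℝ) (E : Set ℂ) (z : ℂ) : ℂ :=
  Complex.exp ((((2 * π)⁻¹ : ℝ) : ℂ) * ∫ θ in Set.Ioc 0 (2 * π),
    ((cpt θ + z) / (cpt θ - z)) * ((Real.log (ω (dE E (cpt θ))) : ℝ) : ℂ))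

/-- `log ω(dist(·,E)) ∈ L¹(𝕋)`. -/
def LogOmegaInt (ω : ℝ → ℝ) (E : Set ℂ) : Prop :=
  IntegrableOn (fun θ => Real.log (ω (dE E (cpt θ)))) (Set.Ioc 0 (2 * π)) volume

/-- Standing hypotheses on `ω` (with derivative `ω'`): continuous, positive, increasing on
`(0,π]`, differentiable with derivative `ω'`, `t ↦ ω(t^γ)` concave, and `t ↦ tω'(t)/ω(t)`
increasing. -/
def OmegaHyp (ω ω' : ℝ → ℝ) (γ : ℝ) : Prop :=
  ContinuousOn ω (Set.Ioc 0 π) ∧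
  (∀ t ∈ Set.Ioc (0 : ℝ) π, 0 < ω t) ∧
  MonotoneOn ω (Set.Ioc 0 π) ∧
  (∀ t ∈ Set.Ioo (0 : ℝ) π, HasDerivAt ω (ω' t) t) ∧
  ConcaveOn ℝ (Set.Ioc 0 (π ^ γ⁻¹)) (fun t => ω (t ^ γ)) ∧
  MonotoneOn (fun t => t * ω' t / ω t) (Set.Ioo 0 π)

/-- The generalized Cantor set `E_{(ζ_n)}` (with `ξ k` playing the role of `ζ_{k+1}`). -/
def gCantorSet (ξ : ℕ → ℝ) : Set ℂ :=
  {z | ∃ ε : ℕ → Bool, z = Complex.exp (((2 * π : ℝ) : ℂ) * Complex.I *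
    ((∑' n : ℕ, (if ε n then (1 : ℝ) else 0) * (∏ k ∈ Finset.range n, ξ k) * (1 - ξ n) : ℝ) : ℂ))}

end

/-!
Near a limit point `e^{ia}` of `E`, suppose that at distance `t` from it `dist(·, E)` is of order
`t` on one side and `o(t)` on the other. For `ζ` on the first side at distance `t`, the arc of
length `t` on the other side belongs to `Γ(ζ, E)`; there `|ζ - ζ'| ≤ 2t` and, off `E`, the
logarithm exceeds any prescribed `M`, so the `𝓛₂`-integral is at least `M² / (4t)`, which beats
`C / dist(ζ, E) = O(1 / t)`. Points tending to `e^{ia}` from one side only have this behaviour when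
the length of each gap between them is `o` of the distance from the gap to `e^{ia}`.

A Bochner integral that does not converge has the value `0` and would satisfy the `𝓛₂`-bound, so
the integral also has to be shown finite. This follows from the integrability of `log² dist(·, E)`,
which is dominated by `dist(·, E)^{-η} + dist(·, E)^η`; the power `-η` is integrable when the
lengths `ℓ` of the gaps satisfy `∑ ℓ^{1-η} < ∞`.
-/

open Filter Asymptotics Topology

/-! ### Arcs and distances on the circle -/

lemma cpt_eq_circleExp (x : ℝ) : cpt x = Circle.exp x := rfl

lemma continuous_cpt : Continuous cpt := by
  unfold cpt; fun_prop

lemma cpt_mem_circleT (x : ℝ) : cpt x ∈ circleT := by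
  simp [circleT, cpt, Complex.norm_exp_ofReal_mul_I]

lemma periodic_cpt : Function.Periodic cpt (2 * π) := fun x => by
  simp only [cpt_eq_circleExp, Circle.exp_add_two_pi]

lemma injOn_cpt_Ico {a b : ℝ} (h : b - a ≤ 2 * π) : InjOn cpt (Ico a b) :=
  Subtype.val_injective.comp_injOn (Circle.exp_injOn_Ico h)

lemma injOn_cpt_Ioc {a b : ℝ} (h : b - a ≤ 2 * π) : InjOn cpt (Ioc a b) :=
  Subtype.val_injective.comp_injOn (Circle.exp_injOn_Ioc h)

lemma exists_cpt_eq {z : ℂ} (hz : z ∈ circleT) (a : ℝ) :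
    ∃ x ∈ Ioc a (a + 2 * π), cpt x = z := by
  obtain ⟨x₀, hx₀⟩ := Circle.exp_surjective ⟨z, hz⟩
  obtain ⟨x, hx, hxx₀⟩ := periodic_cpt.exists_mem_Ioc two_pi_pos x₀ a
  exact ⟨x, hx, hxx₀.symm.trans (congrArg Subtype.val hx₀)⟩

lemma exists_abs_sub_le_pi_cpt_eq {z : ℂ} (hz : z ∈ circleT) (x : ℝ) :
    ∃ y, |x - y| ≤ π ∧ cpt y = z := by
  obtain ⟨y, ⟨h₁, h₂⟩, hy⟩ := exists_cpt_eq hz (x - π)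
  exact ⟨y, abs_le.2 ⟨by linarith, by linarith⟩, hy⟩

lemma norm_cpt_sub_cpt (x y : ℝ) : ‖cpt x - cpt y‖ = 2 * |sin ((x - y) / 2)| := by
  have hfactor : cpt x - cpt y = cpt y * (Complex.exp (Complex.I * ((x - y : ℝ) : ℂ)) - 1) := by
    unfold cpt
    rw [mul_sub, ← Complex.exp_add, mul_one]
    congr 2
    push_cast
    ring
  have hy : ‖cpt y‖ = 1 := Complex.norm_exp_ofReal_mul_I y
  rw [hfactor, norm_mul, hy, one_mul, Complex.norm_exp_I_mul_ofReal_sub_one, norm_mul,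
    norm_ofNat, norm_eq_abs]

lemma norm_cpt_sub_cpt_le (x y : ℝ) : ‖cpt x - cpt y‖ ≤ |x - y| := by
  have h := abs_sin_le_abs (x := (x - y) / 2)
  rw [abs_div, abs_two] at h
  rw [norm_cpt_sub_cpt]
  linarith

lemma two_div_pi_mul_le_norm_cpt_sub_cpt {x y : ℝ} (h : |x - y| ≤ π) :
    2 / π * |x - y| ≤ ‖cpt x - cpt y‖ := by
  have h' := mul_abs_le_abs_sin (x := (x - y) / 2) (by rw [abs_div, abs_two]; linarith)
  rw [abs_div, abs_two] at h'
  rw [norm_cpt_sub_cpt]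
  linarith

lemma norm_cpt_sub_cpt_le_norm_cpt_sub_cpt {x y u : ℝ} (hu : |x - u| ≤ |x - y|)
    (hy : |x - y| ≤ π) : ‖cpt x - cpt u‖ ≤ ‖cpt x - cpt y‖ := by
  have habs (v : ℝ) : |(x - v) / 2| = |x - v| / 2 := by rw [abs_div, abs_two]
  have hsin (v : ℝ) (hv : |x - v| ≤ π) : |sin ((x - v) / 2)| = sin (|x - v| / 2) := by
    rw [abs_sin_eq_sin_abs_of_abs_le_pi (by rw [habs]; linarith [pi_pos]), habs]
  rw [norm_cpt_sub_cpt, norm_cpt_sub_cpt, hsin u (hu.trans hy), hsin y hy]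
  gcongr
  exact sin_le_sin_of_le_of_le_pi_div_two (by linarith [abs_nonneg (x - u), pi_pos])
    (by linarith) (by linarith)

lemma dE_nonneg (E : Set ℂ) (ζ : ℂ) : 0 ≤ dE E ζ := Metric.infDist_nonneg

lemma dE_le_norm_sub {E : Set ℂ} {ζ z : ℂ} (hz : z ∈ E) : dE E ζ ≤ ‖ζ - z‖ :=
  (Metric.infDist_le_dist_of_mem hz).trans_eq (dist_eq_norm ζ z)

lemma continuous_dE_cpt (E : Set ℂ) : Continuous fun θ => dE E (cpt θ) :=
  (Metric.continuous_infDist_pt E).comp continuous_cpt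

lemma notMem_of_dE_pos {E : Set ℂ} {ζ : ℂ} (h : 0 < dE E ζ) : ζ ∉ E :=
  fun hζ => h.ne' (Metric.infDist_zero_of_mem hζ)

lemma two_div_pi_mul_min_le_dE {E : Set ℂ} (hE : E ⊆ circleT) (hne : E.Nonempty) {p q : ℝ}
    (hfree : ∀ x ∈ Ioo p q, cpt x ∉ E) (θ : ℝ) :
    2 / π * min (θ - p) (q - θ) ≤ dE E (cpt θ) := by
  refine (Metric.le_infDist hne).2 fun z hz => ?_
  obtain ⟨x, hx, rfl⟩ := exists_abs_sub_le_pi_cpt_eq (hE hz) θ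
  have hmin : min (θ - p) (q - θ) ≤ |θ - x| := by
    rcases le_or_gt x p with hxp | hpx
    · exact (min_le_left _ _).trans ((by linarith : θ - p ≤ θ - x).trans (le_abs_self _))
    · have hqx : q ≤ x := not_lt.1 fun hxq => hfree x ⟨hpx, hxq⟩ hz
      exact (min_le_right _ _).trans ((by linarith : q - θ ≤ -(θ - x)).trans (neg_le_abs _))
  rw [dist_eq_norm]
  exact (mul_le_mul_of_nonneg_left hmin (by positivity)).trans
    (two_div_pi_mul_le_norm_cpt_sub_cpt hx)

lemma dE_le_norm_sub_of_notMem_compArc {E : Set ℂ} {ζ ζ' : ℂ} (hζ : ζ ∈ circleT)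
    (hζ' : ζ' ∈ circleT) (h : ζ' ∉ compArc E ζ) : dE E ζ ≤ ‖ζ - ζ'‖ := by
  contrapose! h
  obtain ⟨x, -, rfl⟩ := exists_cpt_eq hζ 0
  obtain ⟨y, hxy, rfl⟩ := exists_abs_sub_le_pi_cpt_eq hζ' x
  have hsub : cpt '' uIcc x y ⊆ circleT \ E := by
    rintro _ ⟨u, hu, rfl⟩
    refine ⟨cpt_mem_circleT u, fun hmem => (h.trans_le (dE_le_norm_sub hmem)).not_ge ?_⟩
    refine norm_cpt_sub_cpt_le_norm_cpt_sub_cpt ?_ hxy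
    rw [abs_sub_comm x u, abs_sub_comm x y]
    exact abs_sub_left_of_mem_uIcc hu
  exact (isPreconnected_uIcc.image _ continuous_cpt.continuousOn).subset_connectedComponentIn
    (mem_image_of_mem _ left_mem_uIcc) hsub (mem_image_of_mem _ right_mem_uIcc)

lemma cpt_eq_or_eq_of_cos_sub_eq {a b x : ℝ} (h : cos (x - (a + b) / 2) = cos ((a - b) / 2)) :
    cpt x = cpt a ∨ cpt x = cpt b := by
  obtain ⟨k, hk | hk⟩ := cos_eq_cos_iff.1 h
  · exact Or.inl (by rw [show a = x + k * (2 * π) by linarith, periodic_cpt.int_mul k x])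
  · exact Or.inr (by rw [show x = b + k * (2 * π) by linarith, periodic_cpt.int_mul k b])

lemma cpt_notMem_compArc {E : Set ℂ} {a b u v : ℝ} (ha : cpt a ∈ E) (hb : cpt b ∈ E)
    (hbu : b < u) (hua : u < a) (hav : a < v) (hvb : v < b + 2 * π) :
    cpt u ∉ compArc E (cpt v) := by
  intro hmem
  -- The line through `cpt a` and `cpt b` is a level set of `ℓ` and separates the two arcs.
  let ℓ : ℂ → ℝ := fun z => (z * cpt (-((a + b) / 2))).re
  have hℓ (x : ℝ) : ℓ (cpt x) = cos (x - (a + b) / 2) := by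
    simp only [ℓ, cpt]
    rw [← Complex.exp_add, ← add_mul, ← Complex.ofReal_add, Complex.exp_ofReal_mul_I_re,
      ← sub_eq_add_neg]
  have hv : ℓ (cpt v) ≤ cos ((a - b) / 2) := by
    have h : cos (π - (a - b) / 2) ≤ cos |v - (a + b) / 2 - π| :=
      cos_le_cos_of_nonneg_of_le_pi (abs_nonneg _) (by linarith)
        (abs_le.2 ⟨by linarith, by linarith⟩)
    rw [cos_abs, cos_sub_pi, cos_pi_sub] at h
    rw [hℓ]
    linarith
  have hu : cos ((a - b) / 2) ≤ ℓ (cpt u) := by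
    rw [hℓ, ← cos_abs (u - _)]
    exact cos_le_cos_of_nonneg_of_le_pi (abs_nonneg _) (by linarith)
      (abs_le.2 ⟨by linarith, by linarith⟩)
  have hvmem : cpt v ∈ compArc E (cpt v) :=
    mem_connectedComponentIn (connectedComponentIn_nonempty_iff.1 ⟨_, hmem⟩)
  obtain ⟨z, hz, hℓz⟩ := isPreconnected_connectedComponentIn.intermediate_value hvmem hmem
    (by fun_prop : Continuous ℓ).continuousOn ⟨hv, hu⟩
  obtain ⟨hzcirc, hzE⟩ := connectedComponentIn_subset _ _ hz
  obtain ⟨x, -, rfl⟩ := exists_cpt_eq hzcirc 0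
  rcases cpt_eq_or_eq_of_cos_sub_eq ((hℓ x).symm.trans hℓz) with h | h <;> rw [h] at hzE
  exacts [hzE ha, hzE hb]

lemma eventually_cpt_notMem_compArc {E : Set ℂ} (hE : E ⊆ circleT) {a : ℝ} (ha : cpt a ∈ E)
    (hleft : (fun t => dE E (cpt (a - t))) =o[𝓝[>] 0] fun t : ℝ => t) :
    ∀ᶠ t in 𝓝[>] 0, ∀ y ∈ Ioo 0 t, cpt (a - y) ∉ compArc E (cpt (a + t)) := by
  have hπ := pi_gt_three
  obtain ⟨y₀, hy₀, hy₀1, hd⟩ : ∃ y₀ : ℝ, 0 < y₀ ∧ y₀ < 1 ∧ dE E (cpt (a - y₀)) < y₀ / π := by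
    obtain ⟨y₀, hd, h0, h1⟩ := ((hleft.def (c := 1 / (2 * π)) (by positivity)).and
      (Ioo_mem_nhdsGT one_pos)).exists
    refine ⟨y₀, h0, h1, ?_⟩
    rw [norm_of_nonneg (dE_nonneg E _), norm_of_nonneg h0.le] at hd
    refine hd.trans_lt ?_
    have : 0 < y₀ / (2 * π) := by positivity
    rw [show y₀ / π = 1 / (2 * π) * y₀ + y₀ / (2 * π) by field_simp; ring]
    linarith
  obtain ⟨z, hz, hdz⟩ := (Metric.infDist_lt_iff ⟨_, ha⟩).1 hd
  obtain ⟨b, hb, rfl⟩ := exists_abs_sub_le_pi_cpt_eq (hE hz) (a - y₀)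
  have hclose : |a - y₀ - b| < y₀ / 2 := by
    have h := (two_div_pi_mul_le_norm_cpt_sub_cpt hb).trans_lt (dist_eq_norm (cpt _) _ ▸ hdz)
    rw [div_mul_eq_mul_div, div_lt_div_iff_of_pos_right pi_pos] at h
    linarith
  obtain ⟨hlo, hhi⟩ := abs_lt.1 hclose
  filter_upwards [Ioo_mem_nhdsGT (show 0 < y₀ / 2 by positivity)] with t ht y hy
  exact cpt_notMem_compArc ha hz (by linarith [hy.2, ht.2]) (by linarith [hy.1])
    (by linarith [ht.1]) (by linarith [ht.2])

/-! ### Integrability of powers and logarithms of the distance -/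

lemma log_div_sq_le {x : ℝ} (hx : x ≠ 0) (y : ℝ) :
    log (x / y) ^ 2 ≤ 2 * (log x ^ 2 + log y ^ 2) := by
  rcases eq_or_ne y 0 with rfl | hy
  · rw [div_zero, log_zero, zero_pow two_ne_zero]
    positivity
  · rw [log_div hx hy]
    linarith [sq_nonneg (log x + log y)]

lemma log_sq_le_rpow_add_rpow {x η : ℝ} (hx : 0 ≤ x) (hη : 0 < η) :
    log x ^ 2 ≤ (2 / η) ^ 2 * (x ^ (-η) + x ^ η) := by
  rcases hx.eq_or_lt with rfl | hx
  · rw [log_zero, zero_pow two_ne_zero]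
    positivity
  have key {u : ℝ} (hu : 1 ≤ u) : log u ^ 2 ≤ (2 / η) ^ 2 * u ^ η := by
    have hu0 : 0 ≤ u := by linarith
    have hlog : 0 ≤ log u := log_nonneg hu
    calc log u ^ 2 ≤ (u ^ (η / 2) / (η / 2)) ^ 2 := by
          gcongr
          exact log_le_rpow_div hu0 (half_pos hη)
      _ = (2 / η) ^ 2 * (u ^ (η / 2)) ^ 2 := by field_simp
      _ = (2 / η) ^ 2 * u ^ η := by rw [← rpow_mul_natCast hu0]; norm_num
  have hpos : 0 < x ^ η := rpow_pos_of_pos hx η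
  have hneg : 0 < x ^ (-η) := rpow_pos_of_pos hx (-η)
  rcases le_total 1 x with h1 | h1
  · exact (key h1).trans (by gcongr; linarith)
  · have h := key (one_le_inv_iff₀.2 ⟨hx, h1⟩)
    rw [log_inv, neg_sq, inv_rpow hx.le, ← rpow_neg hx.le] at h
    exact h.trans (by gcongr; linarith)

lemma integrableOn_rpow_gap {p q η : ℝ} (hpq : p ≤ q) (hη : η < 1) :
    IntegrableOn (fun x => (x - p) ^ (-η) + (q - x) ^ (-η)) (Ioo p q) ∧
      ∫ x in Ioo p q, ((x - p) ^ (-η) + (q - x) ^ (-η)) = 2 / (1 - η) * (q - p) ^ (1 - η) := by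
  have hη' : -1 < -η := by linarith
  have hint (a b : ℝ) : IntervalIntegrable (fun x : ℝ => x ^ (-η)) volume a b :=
    intervalIntegral.intervalIntegrable_rpow' hη'
  have hleft : IntervalIntegrable (fun x => (x - p) ^ (-η)) volume p q := by
    simpa using (hint 0 (q - p)).comp_sub_right p
  have hright : IntervalIntegrable (fun x => (q - x) ^ (-η)) volume p q := by
    simpa using (hint (q - p) 0).comp_sub_left q
  have hvalue : ∫ x in (0 : ℝ)..(q - p), x ^ (-η) = (q - p) ^ (1 - η) / (1 - η) := by
    rw [integral_rpow (Or.inl hη'), neg_add_eq_sub, zero_rpow (by linarith), sub_zero]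
  constructor
  · exact ((intervalIntegrable_iff_integrableOn_Ioc_of_le hpq).1 (hleft.add hright)).mono_set
      Ioo_subset_Ioc_self
  · rw [← integral_Ioc_eq_integral_Ioo, ← intervalIntegral.integral_of_le hpq,
      intervalIntegral.integral_add hleft hright,
      intervalIntegral.integral_comp_sub_right (fun x => x ^ (-η)) p,
      intervalIntegral.integral_comp_sub_left (fun x => x ^ (-η)) q, sub_self, sub_self, hvalue]
    ring

section Gaps

variable {E : Set ℂ} {η : ℝ}

lemma dE_rpow_neg_le (hE : E ⊆ circleT) (hne : E.Nonempty) {p q : ℝ}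
    (hfree : ∀ x ∈ Ioo p q, cpt x ∉ E) (hη : 0 ≤ η) {θ : ℝ} (hθ : θ ∈ Ioo p q) :
    dE E (cpt θ) ^ (-η) ≤ (2 / π) ^ (-η) * ((θ - p) ^ (-η) + (q - θ) ^ (-η)) := by
  have hp : 0 < θ - p := sub_pos.2 hθ.1
  have hq : 0 < q - θ := sub_pos.2 hθ.2
  have hmin : 0 < min (θ - p) (q - θ) := lt_min hp hq
  calc dE E (cpt θ) ^ (-η) ≤ (2 / π * min (θ - p) (q - θ)) ^ (-η) :=
        rpow_le_rpow_of_nonpos (by positivity) (two_div_pi_mul_min_le_dE hE hne hfree θ)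
          (neg_nonpos.2 hη)
    _ = (2 / π) ^ (-η) * min (θ - p) (q - θ) ^ (-η) := mul_rpow (by positivity) hmin.le
    _ ≤ (2 / π) ^ (-η) * ((θ - p) ^ (-η) + (q - θ) ^ (-η)) := by
        gcongr
        rcases min_choice (θ - p) (q - θ) with h | h <;> rw [h]
        · exact le_add_of_nonneg_right (by positivity)
        · exact le_add_of_nonneg_left (by positivity)

lemma integrableOn_dE_rpow_neg_of_gap (hE : E ⊆ circleT) (hne : E.Nonempty) {p q : ℝ}
    (hpq : p ≤ q) (hfree : ∀ x ∈ Ioo p q, cpt x ∉ E) (hη0 : 0 ≤ η) (hη1 : η < 1) :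
    IntegrableOn (fun θ => dE E (cpt θ) ^ (-η)) (Ioo p q) ∧
      ∫ θ in Ioo p q, dE E (cpt θ) ^ (-η) ≤
        (2 / π) ^ (-η) * (2 / (1 - η)) * (q - p) ^ (1 - η) := by
  obtain ⟨hint, hvalue⟩ := integrableOn_rpow_gap hpq hη1
  have hbound := fun θ (hθ : θ ∈ Ioo p q) => dE_rpow_neg_le hE hne hfree hη0 hθ
  have hint' : IntegrableOn (fun θ => dE E (cpt θ) ^ (-η)) (Ioo p q) := by
    refine Integrable.mono' (hint.const_mul ((2 / π) ^ (-η)))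
      ((continuous_dE_cpt E).measurable.pow_const _).aestronglyMeasurable ?_
    refine (ae_restrict_mem measurableSet_Ioo).mono fun θ hθ => ?_
    rw [norm_of_nonneg (rpow_nonneg (dE_nonneg E _) _)]
    exact hbound θ hθ
  refine ⟨hint', ?_⟩
  refine (setIntegral_mono_on hint' (hint.const_mul _) measurableSet_Ioo hbound).trans_eq ?_
  rw [integral_const_mul, hvalue, mul_assoc]

lemma integrableOn_dE_rpow_neg_of_summable_gaps {ι : Type*} [Countable ι] (hE : E ⊆ circleT)
    (hne : E.Nonempty) {p q : ι → ℝ} (hpq : ∀ i, p i ≤ q i)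
    (hfree : ∀ i, ∀ x ∈ Ioo (p i) (q i), cpt x ∉ E) (hη0 : 0 ≤ η) (hη1 : η < 1)
    (hsum : Summable fun i => (q i - p i) ^ (1 - η)) :
    IntegrableOn (fun θ => dE E (cpt θ) ^ (-η)) (⋃ i, Ioo (p i) (q i)) := by
  have hgap (i : ι) := integrableOn_dE_rpow_neg_of_gap hE hne (hpq i) (hfree i) hη0 hη1
  have hnorm (θ : ℝ) : ‖dE E (cpt θ) ^ (-η)‖ = dE E (cpt θ) ^ (-η) :=
    norm_of_nonneg (rpow_nonneg (dE_nonneg E _) _)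
  refine integrableOn_iUnion_of_summable_integral_norm (fun i => (hgap i).1) ?_
  simp only [hnorm]
  exact (hsum.mul_left _).of_nonneg_of_le
    (fun i => integral_nonneg fun θ => rpow_nonneg (dE_nonneg E _) _) fun i => (hgap i).2

lemma integrableOn_log_dE_sq_of_summable_gaps {ι : Type*} [Countable ι] (hE : E ⊆ circleT)
    (hne : E.Nonempty) {p q : ι → ℝ} (hpq : ∀ i, p i ≤ q i)
    (hfree : ∀ i, ∀ x ∈ Ioo (p i) (q i), cpt x ∉ E) (hη0 : 0 < η) (hη1 : η < 1)
    (hsum : Summable fun i => (q i - p i) ^ (1 - η)) {a b : ℝ}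
    (hcover : Ioc a b ≤ᵐ[volume] ⋃ i, Ioo (p i) (q i)) :
    IntegrableOn (fun θ => log (dE E (cpt θ)) ^ 2) (Ioc a b) := by
  have hneg := (integrableOn_dE_rpow_neg_of_summable_gaps hE hne hpq hfree hη0.le hη1
    hsum).mono_set_ae hcover
  have hpos : IntegrableOn (fun θ => dE E (cpt θ) ^ η) (Ioc a b) :=
    ((continuous_dE_cpt E).rpow_const fun _ => Or.inr hη0.le).integrableOn_Ioc
  refine Integrable.mono' ((hneg.add hpos).const_mul ((2 / η) ^ 2))
    ((continuous_dE_cpt E).measurable.log.pow_const 2).aestronglyMeasurable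
    (Eventually.of_forall fun θ => ?_)
  rw [norm_of_nonneg (sq_nonneg _)]
  exact log_sq_le_rpow_add_rpow (dE_nonneg E _) hη0

end Gaps

/-! ### One-sided deep approach to a point -/

section Criterion

variable {E : Set ℂ}

lemma ae_dE_cpt_pos (hne : E.Nonempty) (hclosed : IsClosed E) (hnull : MeasureZeroOnCircle E) :
    ∀ᵐ θ, θ ∈ Ioc 0 (2 * π) → 0 < dE E (cpt θ) := by
  filter_upwards [measure_eq_zero_iff_ae_notMem.1 hnull] with θ hθ hmem
  exact (hclosed.notMem_iff_infDist_pos hne).1 fun h => hθ ⟨hmem, h⟩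

lemma integrableOn_log_dE_div_sq_div_sq {ζ : ℂ} (hζ : ζ ∈ circleT) (hd : 0 < dE E ζ)
    (hlog : IntegrableOn (fun θ => log (dE E (cpt θ)) ^ 2) (Ioc 0 (2 * π))) :
    IntegrableOn (fun θ => log (dE E ζ / dE E (cpt θ)) ^ 2 / ‖ζ - cpt θ‖ ^ 2)
      {θ ∈ Ioc 0 (2 * π) | cpt θ ∈ GammaSet E ζ} := by
  have hcont : Continuous fun θ => ‖ζ - cpt θ‖ := (continuous_const.sub continuous_cpt).norm
  -- `Γ(ζ,E)` is replaced by a larger set which is visibly measurable.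
  let S : Set ℝ := Ioc 0 (2 * π) ∩ {θ | dE E ζ ≤ ‖ζ - cpt θ‖}
  have hSmeas : MeasurableSet S :=
    measurableSet_Ioc.inter (measurableSet_le measurable_const hcont.measurable)
  have hsub : {θ ∈ Ioc 0 (2 * π) | cpt θ ∈ GammaSet E ζ} ⊆ S := fun θ hθ =>
    ⟨hθ.1, dE_le_norm_sub_of_notMem_compArc hζ hθ.2.1.1 hθ.2.1.2⟩
  refine IntegrableOn.mono_set ?_ hsub
  have hconst : IntegrableOn (fun _ => log (dE E ζ) ^ 2) (Ioc 0 (2 * π)) :=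
    integrableOn_const measure_Ioc_lt_top.ne
  have hbound : IntegrableOn
      (fun θ => 2 * (log (dE E ζ) ^ 2 + log (dE E (cpt θ)) ^ 2) / dE E ζ ^ 2) S :=
    IntegrableOn.mono_set (((hconst.add hlog).const_mul 2).div_const _) inter_subset_left
  refine Integrable.mono' hbound (Measurable.aestronglyMeasurable ?_) ?_
  · exact ((measurable_const.div (continuous_dE_cpt E).measurable).log.pow_const 2).div
      (hcont.measurable.pow_const 2)
  · refine (ae_restrict_mem hSmeas).mono fun θ hθ => ?_
    rw [norm_of_nonneg (by positivity)]
    gcongr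
    exacts [log_div_sq_le hd.ne' _, hθ.2]

lemma mul_sq_le_circIntOn_GammaSet {ζ : ℂ} (hζ : ζ ∈ circleT) (hd : 0 < dE E ζ)
    (hlog : IntegrableOn (fun θ => log (dE E (cpt θ)) ^ 2) (Ioc 0 (2 * π)))
    (hpos : ∀ᵐ θ, θ ∈ Ioc 0 (2 * π) → 0 < dE E (cpt θ)) {p q r M : ℝ} (hpq : p ≤ q)
    (hM : 0 ≤ M) (hIoo : Ioo p q ⊆ Ioc 0 (2 * π))
    (hcomp : ∀ θ ∈ Ioo p q, cpt θ ∉ compArc E ζ) (hnear : ∀ θ ∈ Ioo p q, ‖ζ - cpt θ‖ ≤ r)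
    (hdeep : ∀ θ ∈ Ioo p q, dE E (cpt θ) ≤ exp (-M) * dE E ζ) :
    (q - p) * (M ^ 2 / r ^ 2) ≤ circIntOn (GammaSet E ζ)
      (fun ζ' => log (dE E ζ / dE E ζ') ^ 2 / ‖ζ - ζ'‖ ^ 2) := by
  have hsub : Ioo p q ⊆ {θ ∈ Ioc 0 (2 * π) | cpt θ ∈ GammaSet E ζ} := fun θ hθ =>
    ⟨hIoo hθ, ⟨cpt_mem_circleT θ, hcomp θ hθ⟩, (hdeep θ hθ).trans
      (mul_le_of_le_one_left hd.le (exp_le_one_iff.2 (neg_nonpos.2 hM)))⟩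
  have hint := integrableOn_log_dE_div_sq_div_sq hζ hd hlog
  have hlow : ∀ᵐ θ, θ ∈ Ioo p q →
      M ^ 2 / r ^ 2 ≤ log (dE E ζ / dE E (cpt θ)) ^ 2 / ‖ζ - cpt θ‖ ^ 2 := by
    filter_upwards [hpos] with θ hθpos hθ
    have hD : 0 < dE E (cpt θ) := hθpos (hIoo hθ)
    have hfar : 0 < ‖ζ - cpt θ‖ := hd.trans_le
      (dE_le_norm_sub_of_notMem_compArc hζ (cpt_mem_circleT θ) (hcomp θ hθ))
    have hM_log : M ≤ log (dE E ζ / dE E (cpt θ)) := by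
      rw [le_log_iff_exp_le (by positivity), le_div_iff₀ hD, ← le_div_iff₀' (exp_pos M),
        div_eq_inv_mul, ← exp_neg]
      exact hdeep θ hθ
    gcongr
    exact hnear θ hθ
  calc (q - p) * (M ^ 2 / r ^ 2) = ∫ _ in Ioo p q, M ^ 2 / r ^ 2 := by
        rw [setIntegral_const, volume_real_Ioo_of_le hpq, smul_eq_mul]
    _ ≤ ∫ θ in Ioo p q, log (dE E ζ / dE E (cpt θ)) ^ 2 / ‖ζ - cpt θ‖ ^ 2 :=
        setIntegral_mono_on_ae (integrableOn_const (by simp)) (hint.mono_set hsub)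
          measurableSet_Ioo hlow
    _ ≤ _ := setIntegral_mono_set hint (Eventually.of_forall fun θ => by positivity)
        (Eventually.of_forall hsub)

lemma eventually_le_circIntOn_GammaSet (hE : E ⊆ circleT) (hclosed : IsClosed E)
    (hnull : MeasureZeroOnCircle E)
    (hlog : IntegrableOn (fun θ => log (dE E (cpt θ)) ^ 2) (Ioc 0 (2 * π)))
    {a : ℝ} (ha : a ∈ Ioc 0 (2 * π)) (haE : cpt a ∈ E)
    (hright : (fun t : ℝ => t) =O[𝓝[>] 0] fun t => dE E (cpt (a + t)))
    (hleft : (fun t => dE E (cpt (a - t))) =o[𝓝[>] 0] fun t : ℝ => t) {M : ℝ} (hM : 0 ≤ M) :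
    ∀ᶠ t in 𝓝[>] 0, M ^ 2 / (4 * t) ≤ circIntOn (GammaSet E (cpt (a + t))) (fun ζ' =>
      log (dE E (cpt (a + t)) / dE E ζ') ^ 2 / ‖cpt (a + t) - ζ'‖ ^ 2) := by
  obtain ⟨K, hK, hKbound⟩ := hright.exists_pos
  obtain ⟨δ, hδ, hδleft⟩ := (nhdsGT_basis (0 : ℝ)).eventually_iff.1
    (hleft.def (c := exp (-M) / K) (by positivity))
  filter_upwards [hKbound.bound, eventually_cpt_notMem_compArc hE haE hleft,
    Ioo_mem_nhdsGT hδ, Ioo_mem_nhdsGT ha.1] with t htK hcomp ht hta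
  have ht0 : 0 < t := ht.1
  rw [norm_of_nonneg ht0.le, norm_of_nonneg (dE_nonneg E _)] at htK
  have hd : 0 < dE E (cpt (a + t)) := pos_of_mul_pos_right (ht0.trans_le htK) hK.le
  have hreflect {θ : ℝ} (hθ : θ ∈ Ioo (a - t) a) : a - θ ∈ Ioo 0 t :=
    ⟨by linarith [hθ.2], by linarith [hθ.1]⟩
  have hnear (θ : ℝ) (hθ : θ ∈ Ioo (a - t) a) : ‖cpt (a + t) - cpt θ‖ ≤ 2 * t :=
    (norm_cpt_sub_cpt_le _ _).trans
      (abs_le.2 ⟨by linarith [hθ.2], by linarith [hθ.1]⟩)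
  have hdeep (θ : ℝ) (hθ : θ ∈ Ioo (a - t) a) :
      dE E (cpt θ) ≤ exp (-M) * dE E (cpt (a + t)) := by
    obtain ⟨hy0, hyt⟩ := hreflect hθ
    have h := hδleft ⟨hy0, hyt.trans ht.2⟩
    rw [sub_sub_cancel, norm_of_nonneg (dE_nonneg E _), norm_of_nonneg hy0.le] at h
    calc dE E (cpt θ) ≤ exp (-M) / K * (a - θ) := h
      _ ≤ exp (-M) / K * (K * dE E (cpt (a + t))) := by gcongr; linarith
      _ = exp (-M) * dE E (cpt (a + t)) := by field_simp
  have hlow := mul_sq_le_circIntOn_GammaSet (cpt_mem_circleT _) hd hlog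
    (ae_dE_cpt_pos ⟨_, haE⟩ hclosed hnull) (sub_le_self a ht0.le) hM
    (fun θ hθ => ⟨by linarith [hθ.1, hta.2], hθ.2.le.trans ha.2⟩)
    (fun θ hθ => sub_sub_cancel a θ ▸ hcomp _ (hreflect hθ)) hnear hdeep
  refine le_of_eq_of_le ?_ hlow
  field_simp
  ring

theorem not_L2Set_of_isLittleO_dE (hE : E ⊆ circleT) (hclosed : IsClosed E)
    (hnull : MeasureZeroOnCircle E)
    (hlog : IntegrableOn (fun θ => log (dE E (cpt θ)) ^ 2) (Ioc 0 (2 * π)))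
    {a : ℝ} (ha : a ∈ Ioc 0 (2 * π)) (haE : cpt a ∈ E)
    (hright : (fun t : ℝ => t) =O[𝓝[>] 0] fun t => dE E (cpt (a + t)))
    (hleft : (fun t => dE E (cpt (a - t))) =o[𝓝[>] 0] fun t : ℝ => t) :
    ¬ L2Set E := by
  rintro ⟨C, hC, hL2⟩
  obtain ⟨K, hK, hKbound⟩ := hright.exists_pos
  obtain ⟨t, htK, hlow, ht⟩ := (hKbound.bound.and ((eventually_le_circIntOn_GammaSet hE hclosed
    hnull hlog ha haE hright hleft (M := 2 * (C * K) + 1) (by positivity)).and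
    self_mem_nhdsWithin)).exists
  rw [norm_of_nonneg (mem_Ioi.1 ht).le, norm_of_nonneg (dE_nonneg E _)] at htK
  have hd : 0 < dE E (cpt (a + t)) := pos_of_mul_pos_right (ht.trans_le htK) hK.le
  have hup : C / dE E (cpt (a + t)) ≤ 4 * (C * K) / (4 * t) := by
    rw [div_le_div_iff₀ hd (by positivity)]
    linarith [mul_le_mul_of_nonneg_left htK hC.le]
  have hle : (2 * (C * K) + 1) ^ 2 / (4 * t) ≤ 4 * (C * K) / (4 * t) :=
    (hlow.trans (hL2 _ ⟨cpt_mem_circleT _, notMem_of_dE_pos hd⟩)).trans hup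
  rw [div_le_div_iff_of_pos_right (by positivity)] at hle
  linarith [sq_nonneg (C * K)]

end Criterion

/-! ### Convergent sequences of points -/

lemma measureZeroOnCircle_of_countable {E : Set ℂ} (hE : E.Countable) : MeasureZeroOnCircle E :=
  (MapsTo.countable_of_injOn (fun _ hθ => hθ.2)
    ((injOn_cpt_Ioc (by simp)).mono fun _ hθ => hθ.1) hE).measure_zero volume

lemma exists_mem_Ico_of_tendsto {X : Type*} [LinearOrder X] [TopologicalSpace X]
    [OrderTopology X] {u : ℕ → X} {L x : X} (hu : Tendsto u atTop (𝓝 L)) (hx : x ∈ Ico (u 0) L) :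
    ∃ n, x ∈ Ico (u n) (u (n + 1)) := by
  obtain ⟨N, hN⟩ := (hu.eventually (lt_mem_nhds hx.2)).exists
  obtain ⟨n, -, hn⟩ := mem_iUnion₂.1 (Ico_subset_biUnion_Ico N u ⟨hx.1, hN⟩)
  exact ⟨n, hn⟩

section Sequences

variable {θ : ℕ → ℝ}

lemma range_cpt_comp_subset_circleT : range (cpt ∘ θ) ⊆ circleT :=
  range_subset_iff.2 fun n => cpt_mem_circleT (θ n)

lemma cpt_two_pi_mem_range (h0 : θ 0 = 0) : cpt (2 * π) ∈ range (cpt ∘ θ) :=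
  ⟨0, by rw [Function.comp_apply, h0, periodic_cpt.eq]⟩

lemma isClosed_range_cpt (h0 : θ 0 = 0) (hlim : Tendsto θ atTop (𝓝 (2 * π))) :
    IsClosed (range (cpt ∘ θ)) := by
  rw [← insert_eq_of_mem (cpt_two_pi_mem_range h0)]
  exact ((continuous_cpt.tendsto _).comp hlim).isCompact_insert_range.isClosed

lemma cpt_notMem_range_of_mem_gap (h0 : θ 0 = 0) (hmono : StrictMono θ)
    (hlim : Tendsto θ atTop (𝓝 (2 * π))) {n : ℕ} {x : ℝ} (hx : x ∈ Ioo (θ n) (θ (n + 1))) :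
    cpt x ∉ range (cpt ∘ θ) := by
  have hmem (m : ℕ) : θ m ∈ Ico 0 (2 * π) :=
    ⟨h0 ▸ hmono.monotone m.zero_le,
      (hmono m.lt_succ_self).trans_le (hmono.monotone.ge_of_tendsto hlim _)⟩
  rintro ⟨m, hm⟩
  have hmx : θ m = x := injOn_cpt_Ico (by simp) (hmem m)
    ⟨(hmem n).1.trans hx.1.le, hx.2.trans (hmem (n + 1)).2⟩ hm
  rw [← hmx, mem_Ioo, hmono.lt_iff_lt, hmono.lt_iff_lt] at hx
  omega

lemma ae_le_iUnion_gaps (h0 : θ 0 = 0) (hlim : Tendsto θ atTop (𝓝 (2 * π))) :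
    (Ioc 0 (2 * π) : Set ℝ) ≤ᵐ[volume] ⋃ n, Ioo (θ n) (θ (n + 1)) := by
  filter_upwards [((countable_range θ).insert (2 * π)).ae_notMem volume] with x hx hmem
  rw [mem_insert_iff, not_or] at hx
  obtain ⟨n, hn⟩ := exists_mem_Ico_of_tendsto hlim
    ⟨h0.trans_le hmem.1.le, hmem.2.lt_of_ne hx.1⟩
  exact mem_iUnion.2 ⟨n, hn.1.lt_of_ne fun h => hx.2 ⟨n, h⟩, hn.2⟩

lemma isBigO_dE_range_cpt (h0 : θ 0 = 0) (hmono : StrictMono θ)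
    (hlim : Tendsto θ atTop (𝓝 (2 * π))) :
    (fun t : ℝ => t) =O[𝓝[>] 0] fun t => dE (range (cpt ∘ θ)) (cpt (2 * π + t)) := by
  have hθ1 : 0 < θ 1 := h0.symm.trans_lt (hmono one_pos)
  refine IsBigO.of_bound (π / 2) ?_
  filter_upwards [Ioo_mem_nhdsGT (half_pos hθ1)] with t ht
  have h := two_div_pi_mul_min_le_dE range_cpt_comp_subset_circleT (range_nonempty _)
    (fun x hx => cpt_notMem_range_of_mem_gap h0 hmono hlim (n := 0) hx) t
  rw [h0, sub_zero, min_eq_left (by linarith [ht.2]), ← periodic_cpt t, add_comm t] at h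
  rw [norm_of_nonneg ht.1.le, norm_of_nonneg (dE_nonneg _ _), ← div_le_iff₀' (by positivity)]
  calc t / (π / 2) = 2 / π * t := by field_simp
    _ ≤ _ := h

lemma isLittleO_dE_range_cpt (hmono : StrictMono θ)
    (hlim : Tendsto θ atTop (𝓝 (2 * π)))
    (hgap : (fun n => θ (n + 1) - θ n) =o[atTop] fun n => 2 * π - θ (n + 1)) :
    (fun t => dE (range (cpt ∘ θ)) (cpt (2 * π - t))) =o[𝓝[>] 0] fun t : ℝ => t := by
  refine isLittleO_iff.2 fun c hc => ?_
  have hle (n : ℕ) : θ n ≤ 2 * π := hmono.monotone.ge_of_tendsto hlim n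
  have hlt (n : ℕ) : θ n < 2 * π := (hmono n.lt_succ_self).trans_le (hle _)
  obtain ⟨N, hN⟩ := eventually_atTop.1 (hgap.def hc)
  filter_upwards [Ioo_mem_nhdsGT (sub_pos.2 (hlt N))] with t ht
  have hNt : θ N < 2 * π - t := by linarith [ht.2]
  obtain ⟨n, hn⟩ := exists_mem_Ico_of_tendsto hlim (x := 2 * π - t)
    ⟨(hmono.monotone N.zero_le).trans hNt.le, by linarith [ht.1]⟩
  have hNn : N ≤ n := Nat.lt_succ_iff.1 (hmono.lt_iff_lt.1 (hNt.trans hn.2))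
  have hgap_n := hN n hNn
  rw [norm_of_nonneg (sub_nonneg.2 (hmono.monotone n.le_succ)),
    norm_of_nonneg (sub_nonneg.2 (hle _))] at hgap_n
  rw [norm_of_nonneg (dE_nonneg _ _), norm_of_nonneg ht.1.le]
  calc dE (range (cpt ∘ θ)) (cpt (2 * π - t)) ≤ ‖cpt (2 * π - t) - cpt (θ n)‖ :=
        dE_le_norm_sub (mem_range_self n)
    _ ≤ |2 * π - t - θ n| := norm_cpt_sub_cpt_le _ _
    _ = 2 * π - t - θ n := abs_of_nonneg (sub_nonneg.2 hn.1)
    _ ≤ θ (n + 1) - θ n := by gcongr; exact hn.2.le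
    _ ≤ c * (2 * π - θ (n + 1)) := hgap_n
    _ ≤ c * t := by gcongr; linarith [hn.2]

theorem not_L2Set_range_cpt (h0 : θ 0 = 0) (hmono : StrictMono θ)
    (hlim : Tendsto θ atTop (𝓝 (2 * π)))
    (hgap : (fun n => θ (n + 1) - θ n) =o[atTop] fun n => 2 * π - θ (n + 1))
    {η : ℝ} (hη0 : 0 < η) (hη1 : η < 1) (hsum : Summable fun n => (θ (n + 1) - θ n) ^ (1 - η)) :
    ¬ L2Set (range (cpt ∘ θ)) := by
  have hlog : IntegrableOn (fun x => log (dE (range (cpt ∘ θ)) (cpt x)) ^ 2) (Ioc 0 (2 * π)) :=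
    integrableOn_log_dE_sq_of_summable_gaps range_cpt_comp_subset_circleT (range_nonempty _)
      (fun n => hmono.monotone n.le_succ)
      (fun _ _ => cpt_notMem_range_of_mem_gap h0 hmono hlim) hη0 hη1 hsum
      (ae_le_iUnion_gaps h0 hlim)
  exact not_L2Set_of_isLittleO_dE range_cpt_comp_subset_circleT (isClosed_range_cpt h0 hlim)
    (measureZeroOnCircle_of_countable (countable_range _)) hlog ⟨two_pi_pos, le_rfl⟩
    (cpt_two_pi_mem_range h0) (isBigO_dE_range_cpt h0 hmono hlim)
    (isLittleO_dE_range_cpt hmono hlim hgap)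

end Sequences

/-! ### Powers -/

lemma one_sub_mul_le_one_add_rpow_neg {s p : ℝ} (hs : -1 < s) (hp : 0 ≤ p) :
    1 - p * s ≤ (1 + s) ^ (-p) := by
  have hs' : 0 < 1 + s := by linarith
  calc 1 - p * s ≤ 1 - p * log (1 + s) := by
        gcongr
        linarith [log_le_sub_one_of_pos hs']
    _ = log (1 + s) * -p + 1 := by ring
    _ ≤ (1 + s) ^ (-p) := by
        rw [rpow_def_of_pos hs']
        exact add_one_le_exp _

lemma rpow_neg_sub_add_one_rpow_neg_le {x p : ℝ} (hx : 0 < x) (hp : 0 ≤ p) :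
    x ^ (-p) - (x + 1) ^ (-p) ≤ p * x ^ (-(p + 1)) := by
  have hscale : (x + 1) ^ (-p) = x ^ (-p) * (1 + 1 / x) ^ (-p) := by
    rw [← mul_rpow hx.le (by positivity)]
    congr 1
    field_simp
  have hbernoulli : 1 - p * (1 / x) ≤ (1 + 1 / x) ^ (-p) :=
    one_sub_mul_le_one_add_rpow_neg (by linarith [one_div_pos.2 hx]) hp
  calc x ^ (-p) - (x + 1) ^ (-p) ≤ x ^ (-p) - x ^ (-p) * (1 - p * (1 / x)) := by
        rw [hscale]
        gcongr
    _ = p * x ^ (-(p + 1)) := by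
        rw [neg_add', rpow_sub_one hx.ne']
        ring

lemma isEquivalent_natCast_rpow_add_one (p : ℝ) :
    (fun n : ℕ => ((n : ℝ) + 1) ^ p) ~[atTop] fun n => ((n : ℝ) + 1 + 1) ^ p := by
  have hbase : Tendsto (fun n : ℕ => ((n : ℝ) + 1) / (n + 1 + 1)) atTop (𝓝 1) := by
    simpa [Function.comp_def] using
      (tendsto_natCast_div_add_atTop (1 : ℝ)).comp (tendsto_add_atTop_nat 1)
  have hpow := hbase.rpow_const (p := p) (Or.inl one_ne_zero)
  rw [one_rpow] at hpow
  refine isEquivalent_of_tendsto_one (hpow.congr fun n => ?_)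
  rw [Pi.div_apply, div_rpow (by positivity) (by positivity)]

/-- The angles in `[0, 2π)` of the points `1, e^{-i 1^{-γ}}, e^{-i 2^{-γ}}, …`. -/
noncomputable def powerAngle (γ : ℝ) : ℕ → ℝ
  | 0 => 0
  | n + 1 => 2 * π - ((n : ℝ) + 1) ^ (-γ)

section PowerAngle

variable {γ : ℝ}

lemma cpt_powerAngle_succ (γ : ℝ) (n : ℕ) :
    cpt (powerAngle γ (n + 1)) =
      Complex.exp (-(Complex.I * ((((n + 1 : ℕ) : ℝ) ^ (-γ) : ℝ) : ℂ))) := by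
  rw [powerAngle, periodic_cpt.sub_eq', cpt]
  push_cast
  ring_nf

lemma range_cpt_comp_powerAngle (γ : ℝ) :
    range (cpt ∘ powerAngle γ) = {z : ℂ | ∃ n : ℕ, 1 ≤ n ∧
      z = Complex.exp (-(Complex.I * (((n : ℝ) ^ (-γ) : ℝ) : ℂ)))} ∪ {1} := by
  have h0 : cpt (powerAngle γ 0) = 1 := by simp [powerAngle, cpt]
  ext z
  constructor
  · rintro ⟨_ | n, rfl⟩
    · exact Or.inr h0
    · exact Or.inl ⟨n + 1, n.succ_pos, cpt_powerAngle_succ γ n⟩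
  · rintro (⟨n, hn, rfl⟩ | rfl)
    · obtain ⟨m, rfl⟩ := Nat.exists_eq_add_of_le' hn
      exact ⟨m + 1, cpt_powerAngle_succ γ m⟩
    · exact ⟨0, h0⟩

lemma powerAngle_succ_sub (γ : ℝ) (n : ℕ) :
    powerAngle γ (n + 1 + 1) - powerAngle γ (n + 1) =
      ((n : ℝ) + 1) ^ (-γ) - ((n : ℝ) + 1 + 1) ^ (-γ) := by
  simp only [powerAngle]
  push_cast
  ring

lemma strictMono_powerAngle (hγ : 0 < γ) : StrictMono (powerAngle γ) := by
  refine strictMono_nat_of_lt_succ fun n => ?_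
  cases n with
  | zero =>
    simp only [powerAngle, Nat.cast_zero, zero_add, one_rpow]
    linarith [pi_gt_three]
  | succ n =>
    rw [← sub_pos, powerAngle_succ_sub, sub_pos]
    exact rpow_lt_rpow_of_neg (by positivity) (lt_add_one _) (neg_lt_zero.2 hγ)

lemma tendsto_powerAngle (hγ : 0 < γ) : Tendsto (powerAngle γ) atTop (𝓝 (2 * π)) := by
  rw [← tendsto_add_atTop_iff_nat 1]
  simpa [powerAngle] using (((tendsto_rpow_neg_atTop hγ).comp
    (tendsto_natCast_atTop_atTop.comp (tendsto_add_atTop_nat 1))).const_sub (2 * π))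

lemma isLittleO_powerAngle_gap (γ : ℝ) :
    (fun n => powerAngle γ (n + 1) - powerAngle γ n) =o[atTop]
      fun n => 2 * π - powerAngle γ (n + 1) := by
  rw [← map_add_atTop_eq_nat 1, isLittleO_map]
  refine (isEquivalent_natCast_rpow_add_one (-γ)).congr' ?_ ?_
  · exact Eventually.of_forall fun n => (powerAngle_succ_sub γ n).symm
  · exact Eventually.of_forall fun n => by simp [powerAngle]

lemma summable_powerAngle_gap_rpow (hγ : 0 < γ) {s : ℝ} (hs : 1 < (γ + 1) * s) :
    Summable fun n => (powerAngle γ (n + 1) - powerAngle γ n) ^ s := by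
  have hs0 : 0 ≤ s := by nlinarith
  have hgap_nonneg (n : ℕ) : 0 ≤ powerAngle γ (n + 1) - powerAngle γ n :=
    sub_nonneg.2 ((strictMono_powerAngle hγ).monotone n.le_succ)
  have hmajorant : Summable fun n : ℕ => γ ^ s * ((n + 1 : ℕ) : ℝ) ^ (-((γ + 1) * s)) :=
    ((summable_nat_add_iff 1).2 (summable_nat_rpow.2 (by linarith))).mul_left _
  rw [← summable_nat_add_iff 1]
  refine hmajorant.of_nonneg_of_le (fun n => rpow_nonneg (hgap_nonneg _) _) fun n => ?_
  have hn : (0 : ℝ) < (n : ℝ) + 1 := by positivity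
  calc (powerAngle γ (n + 1 + 1) - powerAngle γ (n + 1)) ^ s
      ≤ (γ * ((n : ℝ) + 1) ^ (-(γ + 1))) ^ s :=
        rpow_le_rpow (hgap_nonneg _) ((powerAngle_succ_sub γ n).trans_le
          (rpow_neg_sub_add_one_rpow_neg_le hn hγ.le)) hs0
    _ = γ ^ s * ((n + 1 : ℕ) : ℝ) ^ (-((γ + 1) * s)) := by
        rw [mul_rpow hγ.le (by positivity), ← rpow_mul hn.le, neg_mul, Nat.cast_succ]

end PowerAngle

/-- `F = {e^{-i n^{-γ}} : n ≥ 1} ∪ {1}` is not an `𝓛₂`-set. -/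
theorem statement11 (γ : ℝ) (hγ : 0 < γ) :
    ¬ L2Set ({z : ℂ | ∃ n : ℕ, 1 ≤ n ∧
        z = Complex.exp (-(Complex.I * (((n : ℝ) ^ (-γ) : ℝ) : ℂ)))} ∪ {1}) := by
  have hη0 : 0 < γ / (2 * (γ + 1)) := by positivity
  have hη1 : γ / (2 * (γ + 1)) < 1 := by
    rw [div_lt_one (by positivity)]
    linarith
  have hexponent : 1 < (γ + 1) * (1 - γ / (2 * (γ + 1))) := by
    have : (γ + 1) * (1 - γ / (2 * (γ + 1))) = 1 + γ / 2 := by field_simp; ring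
    linarith
  rw [← range_cpt_comp_powerAngle]
  exact not_L2Set_range_cpt rfl (strictMono_powerAngle hγ) (tendsto_powerAngle hγ)
    (isLittleO_powerAngle_gap γ) hη0 hη1 (summable_powerAngle_gap_rpow hγ hexponent)
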